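/- Let R be a Dedekind domain that is not a field such that Cl(R) is infinite and every class of Cl(R) contains infinitely many nonzero prime ideals of R. Let k ∈ ℕ, let 2 ≤ m_1 < … < m_k be integers, and let n_1, …, n_k ∈ ℕ. Then there exists a nonzero nonunit a ∈ R such that: (i) for each i ∈ {1, …, k}, the set of multisets S of cardinality m_i consisting of irreducible elements of the monoid of associate classes Associates(R) with product equal to the class of a in Associates(R) has at least n_i elements (i.e., a has at least n_i essentially distinct factorizations of length m_i); and (ii) every factorization of a into irreducible elements of R has length in {m_1, …, m_k}, i.e., L(a) = {m_1, …, m_k}. -/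

import Mathlib

open scoped nonZeroDivisors

/-- The set of lengths `L(a)` of `a`: the set of all `k` such that `a` is a product of `k`
irreducible elements. -/
def setOfLengths {R : Type*} [CommMonoid R] (a : R) : Set ℕ :=
  {k | ∃ s : Multiset R, (∀ u ∈ s, Irreducible u) ∧ Multiset.card s = k ∧ s.prod = a}

open Function

/-!
Fix lengths `m d ≥ 2`, `d ∈ D`, one of them equal to `2`, and index nonzero prime ideals `P x` by
the points `x` of the grid `∏ d, Fin (m d)`. Choose their classes so that the product over each
slice `x d = c` is trivial, but in otherwise general position: as the class group is infinite,
this only means avoiding finitely many subgroups of infinite index, which cannot cover the group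
of all admissible families (B. H. Neumann). If `D` has at least three elements, the classes can
even be made distinct, so that one prime ideal in each class suffices. The product of all the
`P x` is then a principal ideal `(a)`, factorizations of `a` correspond to partitions of the grid
into minimal nonempty sets over which the classes have trivial product, and slicing in direction
`d` gives a factorization of length `m d`.

There are no other lengths. General position forces the indicator function of a set with trivial
product to be, modulo `2`, a sum of functions of one coordinate each: otherwise it has odd sum
over the corners of some rectangle, and putting `t, t⁻¹, t, t⁻¹` at these corners changes the
product over the set by `t` or `t⁻¹` without affecting the slices. If two such sets are disjoint,
their indicator functions depend on the same coordinates, and if they depend on more than one of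
them, the two sets cover the grid. So in a partition into more than two sets, all sets are unions
of parallel slices, and by minimality they are these slices.

Multiplication by a prime element shifts all lengths by one, which reduces the general case to the
case where the smallest length is `2`.
-/

section Coordinates

variable {D : Type*} [DecidableEq D] {α : D → Type*}

theorem dependsOn_of_update_eq [Finite D] {β : Type*} {f : (∀ d, α d) → β} {s : Set D}
    (h : ∀ x, ∀ d ∉ s, ∀ a, f (update x d a) = f x) : DependsOn f s := by
  cases nonempty_fintype D
  intro x y hxy
  have agree : ∀ t : Finset D, f (t.piecewise y x) = f x := by
    intro t
    induction t using Finset.induction with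
    | empty => simp only [Finset.piecewise_empty]
    | insert d t hd ih =>
      rw [Finset.piecewise_insert]
      by_cases hds : d ∈ s
      · rwa [← hxy d hds, ← Finset.piecewise_eq_of_notMem t y x hd, update_eq_self]
      · rw [h _ d hds, ih]
  simpa only [Finset.piecewise_univ] using (agree Finset.univ).symm

/-- A subset `A` of a product is *parity separable* if whether replacing the `p`-th coordinate of
`x` by `a` preserves membership in `A` depends on `x p` only. Equivalently, the indicator function
of `A` modulo `2` is a sum of functions of one coordinate each. -/
def IsParitySeparable (A : Set (∀ d, α d)) : Prop :=
  ∀ (p : D) (a : α p) (x y : ∀ d, α d), x p = y p →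
    ((x ∈ A ↔ update x p a ∈ A) ↔ (y ∈ A ↔ update y p a ∈ A))

/-- The coordinate `p` is *active* for `A` if changing it can change membership in `A`. -/
def IsActive (A : Set (∀ d, α d)) (p : D) : Prop :=
  ∃ (x : ∀ d, α d) (a : α p), ¬ (x ∈ A ↔ update x p a ∈ A)

variable {A B : Set (∀ d, α d)} {p q r : D}

theorem exists_rectangle_of_not_isParitySeparable [Finite D] (hA : ¬ IsParitySeparable A) :
    ∃ p q, p ≠ q ∧ ∃ (w : ∀ d, α d) (a : α p) (b : α q),
      ¬ ((w ∈ A ↔ update w p a ∈ A) ↔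
        (update w q b ∈ A ↔ update (update w q b) p a ∈ A)) := by
  by_contra hrect
  refine hA fun p a x y hxy => ?_
  have hdep : DependsOn (fun z => (z ∈ A ↔ update z p a ∈ A)) {p} := by
    refine dependsOn_of_update_eq fun z q hq b => propext ?_
    by_contra hz
    exact hrect ⟨p, q, Ne.symm hq, z, a, b, fun h => hz h.symm⟩
  exact iff_of_eq (hdep fun _ hd => hd ▸ hxy)

theorem dependsOn_mem_of_isActive_imp_mem [Finite D] {s : Set D} (h : ∀ q, IsActive A q → q ∈ s) :
    DependsOn (· ∈ A) s := by
  refine dependsOn_of_update_eq fun x d hd a => propext ?_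
  by_contra hne
  exact hd (h d ⟨x, a, fun hiff => hne hiff.symm⟩)

theorem exists_isActive [Finite D] (hne : A.Nonempty) (huniv : A ≠ Set.univ) :
    ∃ p, IsActive A p := by
  by_contra! hinactive
  obtain ⟨v, hv⟩ := hne
  have hconst : DependsOn (· ∈ A) ∅ :=
    dependsOn_mem_of_isActive_imp_mem fun q hq => (hinactive q hq).elim
  exact huniv (Set.eq_univ_of_forall fun u => (hconst.empty v u).mp hv)

theorem IsActive.exists_mem_apply_eq (hq : IsActive B q) (hB : IsParitySeparable B) (hqr : q ≠ r)
    (c : α r) : ∃ y ∈ B, y r = c := by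
  obtain ⟨z, a, hz⟩ := hq
  by_contra! hmiss
  have hout : update z r c ∉ B := fun h => hmiss _ h (update_self ..)
  have hout' : update (update z r c) q a ∉ B := fun h =>
    hmiss _ h (by rw [update_of_ne hqr.symm, update_self])
  exact hz ((hB q a z (update z r c) (update_of_ne hqr ..).symm).mpr (iff_of_false hout hout'))

theorem IsParitySeparable.mem_update_iff_of_mem (hA : IsParitySeparable A)
    (hAB : Disjoint A B) {x y : ∀ d, α d} {a : α p} (hy : y ∈ B) (hy' : update y p a ∈ B)
    (hxy : x p = y p) : x ∈ A ↔ update x p a ∈ A :=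
  (hA p a x y hxy).mpr
    (iff_of_false (Set.disjoint_right.mp hAB hy) (Set.disjoint_right.mp hAB hy'))

theorem IsActive.of_disjoint (hp : IsActive A p) (hA : IsParitySeparable A) (hAB : Disjoint A B)
    (hB : B.Nonempty) : IsActive B p := by
  by_contra hinactive
  obtain ⟨x, a, hx⟩ := hp
  obtain ⟨y, hy⟩ := hB
  have hstable : ∀ z (c : α p), z ∈ B → update z p c ∈ B := by
    intro z c hz
    by_contra hc
    exact hinactive ⟨z, c, fun h => hc (h.mp hz)⟩
  have hy' := hstable y (x p) hy
  exact hx (hA.mem_update_iff_of_mem hAB hy' (hstable _ a hy') (update_self ..).symm)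

theorem IsParitySeparable.mem_update_iff_of_isActive_ne (hA : IsParitySeparable A)
    (hB : IsParitySeparable B) (hAB : Disjoint A B) (hq : IsActive B q) (hqr : q ≠ r)
    {x : ∀ d, α d} {a : α r} (hx : x ∈ B ↔ update x r a ∈ B) :
    x ∈ A ↔ update x r a ∈ A := by
  obtain ⟨y, hy, hyr⟩ := hq.exists_mem_apply_eq hB hqr (x r)
  exact hA.mem_update_iff_of_mem hAB hy (((hB r a y x hyr).mpr hx).mp hy) hyr.symm

-- A coordinate change affects membership in `A` exactly when it affects membership in `B`;
-- as the two sets are disjoint, it never affects membership in `A ∪ B`.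
theorem IsParitySeparable.union_eq_univ [Finite D] (hA : IsParitySeparable A)
    (hB : IsParitySeparable B) (hAB : Disjoint A B) (hne : A.Nonempty) (hne' : B.Nonempty)
    (hpq : p ≠ q) (hp : IsActive A p) (hq : IsActive A q) : A ∪ B = Set.univ := by
  have hinactive : ∀ r, ¬ IsActive (A ∪ B) r := by
    rintro r ⟨x, a, hx⟩
    obtain ⟨s, hsr, hs⟩ : ∃ s, s ≠ r ∧ IsActive A s := by
      by_cases hpr : p = r
      · exact ⟨q, hpr ▸ hpq.symm, hq⟩
      · exact ⟨p, hpr, hp⟩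
    have hs' := hs.of_disjoint hA hAB hne'
    have hAofB := hA.mem_update_iff_of_isActive_ne hB hAB hs' hsr (x := x) (a := a)
    have hBofA := hB.mem_update_iff_of_isActive_ne hA hAB.symm hs hsr (x := x) (a := a)
    have hx₁ : x ∈ A → x ∉ B := fun h => Set.disjoint_left.mp hAB h
    have hx₂ : update x r a ∈ A → update x r a ∉ B := fun h => Set.disjoint_left.mp hAB h
    simp only [Set.mem_union] at hx
    tauto
  by_contra huniv
  obtain ⟨r, hr⟩ := exists_isActive (hne.mono Set.subset_union_left) huniv
  exact hinactive r hr

end Coordinates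

section ProductOne

variable {X G : Type*} [CommMonoid G]

/-- The family `g` has product one over `A`; this is a zero-sum set in additive terminology. -/
def IsProductOne (g : X → G) (A : Finset X) : Prop := ∏ x ∈ A, g x = 1

theorem isProductOne_empty (g : X → G) : IsProductOne g ∅ := Finset.prod_empty

/-- The homomorphism sending a family to its product over `A`. -/
def prodOver (G : Type*) [CommMonoid G] (A : Finset X) : (X → G) →* G :=
  ∏ x ∈ A, Pi.evalMonoidHom (fun _ => G) x

theorem prodOver_apply (A : Finset X) (g : X → G) :
    prodOver G A g = ∏ x ∈ A, g x := by
  simp only [prodOver, MonoidHom.finsetProd_apply, Pi.evalMonoidHom_apply]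

variable [DecidableEq X] {g : X → G} {A B : Finset X}

theorem IsProductOne.biUnion {ι : Type*} {S : Finset ι} {A : ι → Finset X}
    (hA : ∀ i ∈ S, IsProductOne g (A i)) (hdisj : (S : Set ι).PairwiseDisjoint A) :
    IsProductOne g (S.biUnion A) := by
  rw [IsProductOne, Finset.prod_biUnion hdisj]
  exact Finset.prod_eq_one hA

theorem IsProductOne.sdiff (hA : IsProductOne g A) (hB : IsProductOne g B) (hBA : B ⊆ A) :
    IsProductOne g (A \ B) := by
  have hprod := Finset.prod_sdiff (f := g) hBA
  rwa [hA, hB, mul_one] at hprod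

end ProductOne

open scoped Pointwise in
theorem exists_forall_map_ne_one {H G ι : Type*} [Group H] [Group G] [Infinite G] [Finite ι]
    (φ : ι → H →* G) (hφ : ∀ i, Surjective (φ i)) : ∃ h, ∀ i, φ i h ≠ 1 := by
  cases nonempty_fintype ι
  by_contra! hcover
  have hkernels : ⋃ i ∈ Finset.univ, (1 : H) • ((φ i).ker : Set H) = Set.univ :=
    Set.eq_univ_of_forall fun h => by
      simpa only [one_smul, Set.mem_iUnion₂, SetLike.mem_coe, MonoidHom.mem_ker, Finset.mem_univ,
        exists_prop, true_and] using hcover h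
  obtain ⟨i, -, hfinite⟩ := Subgroup.exists_finiteIndex_of_leftCoset_cover hkernels
  refine hfinite.index_ne_zero ?_
  rw [Subgroup.index_ker, MonoidHom.range_eq_top.mpr (hφ i), Subgroup.card_top,
    Nat.card_eq_zero_of_infinite]

section Rectangle

variable {D : Type*} [Fintype D] [DecidableEq D] {α : D → Type*} [∀ d, DecidableEq (α d)]
  {G : Type*} [CommGroup G]

/-- The family supported on the rectangle obtained from `w` by moving its coordinates `p` to `a`
and `q` to `b`, with values `t` and `t⁻¹` alternating around the rectangle. -/
def rectangle (w : ∀ d, α d) {p q : D} (a : α p) (b : α q) (t : G) : (∀ d, α d) → G :=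
  Pi.mulSingle w t / Pi.mulSingle (update w p a) t /
    (Pi.mulSingle (update w q b) t / Pi.mulSingle (update (update w q b) p a) t)

theorem prodOver_rectangle (A : Finset (∀ d, α d)) (w : ∀ d, α d) {p q : D} (a : α p) (b : α q)
    (t : G) :
    prodOver G A (rectangle w a b t) =
      (if w ∈ A then t else 1) / (if update w p a ∈ A then t else 1) /
        ((if update w q b ∈ A then t else 1) /
          (if update (update w q b) p a ∈ A then t else 1)) := by
  simp only [rectangle, map_div, prodOver_apply, Finset.prod_pi_mulSingle']

theorem prodOver_rectangle_eq_or_eq_inv {A : Finset (∀ d, α d)} {w : ∀ d, α d} {p q : D} {a : α p}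
    {b : α q} (h : ¬ ((w ∈ A ↔ update w p a ∈ A) ↔
      (update w q b ∈ A ↔ update (update w q b) p a ∈ A))) (t : G) :
    prodOver G A (rectangle w a b t) = t ∨ prodOver G A (rectangle w a b t) = t⁻¹ := by
  rw [prodOver_rectangle]
  split_ifs <;> simp_all

end Rectangle

section Grid

variable {D : Type*} [Fintype D] [DecidableEq D] {α : D → Type*} [∀ d, Fintype (α d)]
  [∀ d, DecidableEq (α d)] {G : Type*} [CommGroup G]

/-- The slice of the grid `∀ d, α d` on which the `p`-th coordinate equals `a`. -/
def slice (p : D) (a : α p) : Finset (∀ d, α d) := {x | x p = a}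

@[simp]
theorem mem_slice {p : D} {a : α p} {x : ∀ d, α d} : x ∈ slice p a ↔ x p = a := by
  simp only [slice, Finset.mem_filter_univ]

theorem pairwise_disjoint_slice (p : D) : Pairwise (Disjoint on slice (α := α) p) :=
  fun _ _ hab => Finset.disjoint_left.mpr fun _ hx hx' =>
    hab ((mem_slice.mp hx).symm.trans (mem_slice.mp hx'))

theorem biUnion_slice (p : D) : Finset.univ.biUnion (slice (α := α) p) = Finset.univ := by
  ext x
  simp only [Finset.mem_biUnion, mem_slice, exists_eq', Finset.mem_univ, true_and]

/-- A family on a grid is in *general position* if its values are distinct, its product over each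
slice is one, and no set that fails to be parity separable has product one. -/
structure IsGridGeneric (g : (∀ d, α d) → G) : Prop where
  injective : Injective g
  isProductOne_slice (p : D) (a : α p) : IsProductOne g (slice p a)
  isParitySeparable {A : Finset (∀ d, α d)} :
    IsProductOne g A → IsParitySeparable (A : Set (∀ d, α d))

theorem IsGridGeneric.isProductOne_univ [Nonempty D] {g : (∀ d, α d) → G}
    (hg : IsGridGeneric g) : IsProductOne g Finset.univ := by
  let p : D := Classical.arbitrary D
  rw [← biUnion_slice p]
  exact .biUnion (fun a _ => hg.isProductOne_slice p a) ((pairwise_disjoint_slice p).set_pairwise _)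

/-- The group of families whose product over each slice is one. -/
def sliceProductOne (α : D → Type*) [∀ d, Fintype (α d)] [∀ d, DecidableEq (α d)]
    (G : Type*) [CommGroup G] : Subgroup ((∀ d, α d) → G) :=
  ⨅ (p : D) (a : α p), (prodOver G (slice p a)).ker

theorem mem_sliceProductOne {g : (∀ d, α d) → G} :
    g ∈ sliceProductOne α G ↔ ∀ p a, IsProductOne g (slice p a) := by
  simp only [sliceProductOne, Subgroup.mem_iInf, MonoidHom.mem_ker, prodOver_apply, IsProductOne]

theorem rectangle_mem_sliceProductOne (w : ∀ d, α d) {p q : D} (hpq : p ≠ q) (a : α p) (b : α q)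
    (t : G) : rectangle w a b t ∈ sliceProductOne α G := by
  rw [mem_sliceProductOne]
  intro r c
  rw [IsProductOne, ← prodOver_apply, prodOver_rectangle]
  simp only [mem_slice]
  rcases eq_or_ne r p with rfl | hrp
  · simp only [update_self, update_of_ne hpq, div_self']
  · simp only [update_of_ne hrp, div_self']

theorem surjective_prodOver_of_not_isParitySeparable {A : Finset (∀ d, α d)}
    (hA : ¬ IsParitySeparable (A : Set (∀ d, α d))) :
    Surjective ((prodOver G A).comp (sliceProductOne α G).subtype) := by
  obtain ⟨p, q, hpq, w, a, b, hw⟩ := exists_rectangle_of_not_isParitySeparable hA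
  intro t
  let rect : sliceProductOne α G :=
    ⟨rectangle w a b t, rectangle_mem_sliceProductOne w hpq a b t⟩
  rcases prodOver_rectangle_eq_or_eq_inv hw t with h | h
  · exact ⟨rect, h⟩
  · exact ⟨rect⁻¹, by rw [map_inv, inv_eq_iff_eq_inv]; exact h⟩

theorem surjective_prodOver_div_prodOver_singleton [∀ d, Nontrivial (α d)]
    (hD : 2 < Fintype.card D) {x y : ∀ d, α d} (hxy : x ≠ y) :
    Surjective ((prodOver G {x} / prodOver G {y}).comp (sliceProductOne α G).subtype) := by
  obtain ⟨d, hd⟩ := ne_iff.mp hxy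
  obtain ⟨p, hp⟩ := Fintype.exists_ne_of_one_lt_card (one_lt_two.trans hD) d
  obtain ⟨q, hq⟩ := Finset.exists_mem_notMem_of_card_lt_card
    (Finset.card_le_two.trans_lt hD : ({d, p} : Finset D).card < Finset.univ.card)
  simp only [Finset.mem_univ, Finset.mem_insert, Finset.mem_singleton, not_or, true_and] at hq
  obtain ⟨a, ha⟩ := exists_ne (x p)
  obtain ⟨b, hb⟩ := exists_ne (x q)
  have hx_ne : ∀ z : ∀ d, α d, ∀ r c, c ≠ x r → update z r c ≠ x := fun z r c hc h =>
    hc ((update_self r c z).symm.trans (congrFun h r))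
  have hy_ne : ∀ z : ∀ d, α d, z d = x d → z ≠ y := fun z hz h => hd (hz ▸ congrFun h d)
  intro t
  refine ⟨⟨rectangle x a b t, rectangle_mem_sliceProductOne x (Ne.symm hq.2) a b t⟩, ?_⟩
  have hx : prodOver G {x} (rectangle x a b t) = t := by
    simp only [prodOver_rectangle, Finset.mem_singleton, hx_ne _ _ _ ha, hx_ne _ _ _ hb, if_true,
      if_false, div_one]
  have hy : prodOver G {y} (rectangle x a b t) = 1 := by
    simp only [prodOver_rectangle, Finset.mem_singleton, hy_ne _ rfl, hy_ne (update x p a),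
      hy_ne (update x q b), hy_ne (update (update x q b) p a), update_of_ne hp.symm,
      update_of_ne (Ne.symm hq.1), if_false, div_one]
  rw [MonoidHom.comp_apply, Subgroup.subtype_apply, MonoidHom.div_apply, hx, hy, div_one]

theorem exists_isGridGeneric (α : D → Type*) [∀ d, Fintype (α d)] [∀ d, DecidableEq (α d)]
    [∀ d, Nontrivial (α d)] (G : Type*) [CommGroup G] [Infinite G] (hD : 2 < Fintype.card D) :
    ∃ g : (∀ d, α d) → G, IsGridGeneric g := by
  let φ : {A : Finset (∀ d, α d) // ¬ IsParitySeparable (A : Set (∀ d, α d))} ⊕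
      {z : (∀ d, α d) × (∀ d, α d) // z.1 ≠ z.2} → ((∀ d, α d) → G) →* G :=
    Sum.elim (fun A => prodOver G A) fun z => prodOver G {z.1.1} / prodOver G {z.1.2}
  have hφ : ∀ i, Surjective ((φ i).comp (sliceProductOne α G).subtype) := by
    rintro (⟨A, hA⟩ | ⟨z, hz⟩)
    · exact surjective_prodOver_of_not_isParitySeparable hA
    · exact surjective_prodOver_div_prodOver_singleton hD hz
  obtain ⟨g, hg⟩ := exists_forall_map_ne_one _ hφ
  refine ⟨g, ?_, mem_sliceProductOne.mp g.2, fun {A} hA => ?_⟩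
  · intro x y hxy
    by_contra hne
    have hdiv : g.1 x / g.1 y = 1 := div_eq_one.mpr hxy
    refine hg (.inr ⟨(x, y), hne⟩) ?_
    simpa only [φ, MonoidHom.comp_apply, Subgroup.subtype_apply, Sum.elim_inr, MonoidHom.div_apply,
      prodOver_apply, Finset.prod_singleton] using hdiv
  · by_contra hsep
    exact hg (.inl ⟨A, hsep⟩) ((prodOver_apply A _).trans hA)

end Grid

theorem one_lt_card_parts_of_notMem {L : Type*} [Lattice L] [OrderBot L] {s : L} (hs : s ≠ ⊥)
    (P : Finpartition s) (h : s ∉ P.parts) : 1 < P.parts.card := by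
  by_contra! hcard
  obtain ⟨b, hb⟩ := Finset.card_eq_one.mp
    (hcard.antisymm (Finset.card_pos.mpr (P.parts_nonempty hs)))
  have hsup := P.sup_parts
  rw [hb, Finset.sup_singleton, id] at hsup
  exact h (hb ▸ Finset.mem_singleton.mpr hsup.symm)

theorem sup_ne_of_two_lt_card_parts {L : Type*} [DistribLattice L] [OrderBot L] {s : L}
    (P : Finpartition s) (hcard : 2 < P.parts.card) {a b : L} (ha : a ∈ P.parts)
    (hb : b ∈ P.parts) : a ⊔ b ≠ s := by
  classical
  obtain ⟨c, hc, hcab⟩ := Finset.exists_mem_notMem_of_card_lt_card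
    (Finset.card_le_two.trans_lt hcard : ({a, b} : Finset L).card < P.parts.card)
  simp only [Finset.mem_insert, Finset.mem_singleton, not_or] at hcab
  rintro rfl
  exact P.ne_bot hc (((P.disjoint hc ha hcab.1).sup_right (P.disjoint hc hb hcab.2)).eq_bot_of_le
    (P.le hc))

theorem exists_forall_isActive_eq {D : Type*} [Fintype D] [DecidableEq D] {α : D → Type*}
    [∀ d, Fintype (α d)] [∀ d, DecidableEq (α d)]
    (P : Finpartition (Finset.univ : Finset (∀ d, α d)))
    (hP : ∀ A ∈ P.parts, IsParitySeparable (A : Set (∀ d, α d))) (hcard : 2 < P.parts.card) :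
    ∃ p, ∀ A ∈ P.parts, ∀ q, IsActive (A : Set (∀ d, α d)) q → q = p := by
  have hdisj : ∀ {A B}, A ∈ P.parts → B ∈ P.parts → A ≠ B →
      Disjoint (A : Set (∀ d, α d)) (B : Set (∀ d, α d)) := fun hA hB hAB =>
    Finset.disjoint_coe.mpr (P.disjoint hA hB hAB)
  have hunique : ∀ A ∈ P.parts, ∀ p q, IsActive (A : Set (∀ d, α d)) p →
      IsActive (A : Set (∀ d, α d)) q → q = p := by
    intro A hA p q hp hq
    obtain ⟨B, hB, hBA⟩ := Finset.exists_mem_ne (one_lt_two.trans hcard) A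
    by_contra hqp
    have hunion := (hP A hA).union_eq_univ (hP B hB) (hdisj hA hB hBA.symm)
      (P.nonempty_of_mem_parts hA) (P.nonempty_of_mem_parts hB) (Ne.symm hqp) hp hq
    exact sup_ne_of_two_lt_card_parts P hcard hA hB (by exact_mod_cast hunion)
  obtain ⟨A, hA⟩ := Finset.card_pos.mp (two_pos.trans hcard)
  have hA_univ : (A : Set (∀ d, α d)) ≠ Set.univ := by
    simpa only [sup_idem, ne_eq, Finset.coe_eq_univ] using
      sup_ne_of_two_lt_card_parts P hcard hA hA
  obtain ⟨p, hp⟩ := exists_isActive (P.nonempty_of_mem_parts hA) hA_univ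
  refine ⟨p, fun B hB q hq => ?_⟩
  rcases eq_or_ne A B with rfl | hAB
  · exact hunique A hA p q hp hq
  · exact hunique B hB p q (hp.of_disjoint (hP A hA) (hdisj hA hB hAB)
      (P.nonempty_of_mem_parts hB)) hq

section SlicePartition

variable {D : Type*} [Fintype D] [DecidableEq D] {α : D → Type*} [∀ d, Fintype (α d)]
  [∀ d, DecidableEq (α d)] {p q : D}

theorem eq_of_isActive_slice {a : α p} (hq : IsActive (slice p a : Set (∀ d, α d)) q) : q = p := by
  by_contra hqp
  obtain ⟨x, b, hx⟩ := hq
  exact hx (by simp only [Finset.mem_coe, mem_slice, update_of_ne (Ne.symm hqp)])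

theorem slice_subset_of_isActive_imp_eq {A : Finset (∀ d, α d)} {x : ∀ d, α d} (hx : x ∈ A)
    (hA : ∀ q, IsActive (A : Set (∀ d, α d)) q → q = p) : slice p (x p) ⊆ A := by
  have hdep : DependsOn (· ∈ (A : Set (∀ d, α d))) {p} := dependsOn_mem_of_isActive_imp_mem hA
  intro y hy
  exact (hdep fun _ hd => hd ▸ (mem_slice.mp hy).symm).mp hx

section Nonempty

variable [∀ d, Nonempty (α d)]

theorem slice_nonempty (p : D) (a : α p) : (slice p a).Nonempty :=
  ⟨update (fun _ => Classical.arbitrary _) p a, mem_slice.mpr (update_self ..)⟩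

theorem slice_injective (p : D) : Injective (slice (α := α) p) := by
  intro a b hab
  obtain ⟨x, hx⟩ := slice_nonempty p a
  exact (mem_slice.mp hx).symm.trans (mem_slice.mp (hab ▸ hx))

theorem parts_eq_image_slice (P : Finpartition (Finset.univ : Finset (∀ d, α d)))
    (hP : ∀ A ∈ P.parts, ∃ a, slice p a = A) : P.parts = Finset.univ.image (slice p) := by
  ext A
  rw [Finset.mem_image]
  refine ⟨fun hA => (hP A hA).imp fun a ha => ⟨Finset.mem_univ a, ha⟩, ?_⟩
  rintro ⟨a, -, rfl⟩
  obtain ⟨x, hx⟩ := slice_nonempty p a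
  obtain ⟨A, hA, hxA⟩ := P.exists_mem (Finset.mem_univ x)
  obtain ⟨b, rfl⟩ := hP A hA
  rwa [← mem_slice.mp hx, mem_slice.mp hxA]

end Nonempty

variable [∀ d, Nontrivial (α d)]

theorem slice_ne_slice (hpq : p ≠ q) (a : α p) (b : α q) : slice p a ≠ slice q b := by
  intro heq
  obtain ⟨b', hb'⟩ := exists_ne b
  obtain ⟨x, hx⟩ := slice_nonempty p a
  have hmem : update x q b' ∈ slice p a := by
    rw [mem_slice, update_of_ne hpq, mem_slice.mp hx]
  rw [heq, mem_slice, update_self] at hmem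
  exact hb' hmem

theorem slice_ne_univ (p : D) (a : α p) : slice p a ≠ Finset.univ := by
  intro heq
  obtain ⟨b, hb⟩ := exists_ne a
  obtain ⟨x, hx⟩ := slice_nonempty p b
  exact hb ((mem_slice.mp hx).symm.trans (mem_slice.mp (heq ▸ Finset.mem_univ x)))

variable {G : Type*} [CommGroup G] {g : (∀ d, α d) → G}

theorem IsGridGeneric.minimal_slice (hg : IsGridGeneric g) (p : D) (a : α p) :
    Minimal (fun A => A.Nonempty ∧ IsProductOne g A) (slice p a) := by
  refine ⟨⟨slice_nonempty p a, hg.isProductOne_slice p a⟩, fun B ⟨hBne, hB⟩ hBa => ?_⟩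
  obtain ⟨b, hb⟩ := exists_ne a
  have hdisj : Disjoint (B : Set (∀ d, α d)) (slice p b) :=
    Finset.disjoint_coe.mpr ((pairwise_disjoint_slice p hb.symm).mono_left hBa)
  obtain ⟨x, hx⟩ := hBne
  rw [← mem_slice.mp (hBa hx)]
  exact slice_subset_of_isActive_imp_eq hx fun q hq =>
    eq_of_isActive_slice (hq.of_disjoint (hg.isParitySeparable hB) hdisj (slice_nonempty p b))

theorem IsGridGeneric.eq_slice_of_minimal (hg : IsGridGeneric g) {A : Finset (∀ d, α d)}
    (hA : Minimal (fun A => A.Nonempty ∧ IsProductOne g A) A)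
    (hp : ∀ q, IsActive (A : Set (∀ d, α d)) q → q = p) : ∃ a, slice p a = A := by
  obtain ⟨x, hx⟩ := hA.prop.1
  exact ⟨x p, (hA.eq_of_le ⟨slice_nonempty p _, hg.isProductOne_slice p _⟩
    (slice_subset_of_isActive_imp_eq hx hp))⟩

theorem IsGridGeneric.not_minimal_univ [Nonempty D] (hg : IsGridGeneric g) :
    ¬ Minimal (fun A => A.Nonempty ∧ IsProductOne g A) Finset.univ := by
  intro hmin
  let p : D := Classical.arbitrary D
  let a : α p := Classical.arbitrary (α p)
  exact slice_ne_univ p a (hmin.eq_of_le (hg.minimal_slice p a).prop (Finset.subset_univ _))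

theorem IsGridGeneric.card_parts_eq [Nonempty D] (hg : IsGridGeneric g)
    (P : Finpartition (Finset.univ : Finset (∀ d, α d)))
    (hP : ∀ A ∈ P.parts, Minimal (fun A => A.Nonempty ∧ IsProductOne g A) A) :
    P.parts.card = 2 ∨ ∃ d, P.parts.card = Fintype.card (α d) := by
  have hlt : 1 < P.parts.card := one_lt_card_parts_of_notMem Finset.univ_nonempty.ne_empty P
    fun hmem => hg.not_minimal_univ (hP _ hmem)
  rcases eq_or_lt_of_le (Nat.succ_le_of_lt hlt) with htwo | hcard
  · exact Or.inl htwo.symm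
  obtain ⟨p, hp⟩ := exists_forall_isActive_eq P
    (fun A hA => hg.isParitySeparable (hP A hA).prop.2) hcard
  have hslices : P.parts = Finset.univ.image (slice p) :=
    parts_eq_image_slice P fun A hA => hg.eq_slice_of_minimal (hP A hA) (hp A hA)
  exact Or.inr ⟨p, by rw [hslices, Finset.card_image_of_injective _ (slice_injective p),
    Finset.card_univ]⟩

end SlicePartition

section Factorizations

/-- The factorizations of `a` of length `l`, that is, the multisets of `l` irreducible elements
with product `a`. -/
def factorizations {M : Type*} [CommMonoid M] (a : M) (l : ℕ) : Set (Multiset M) :=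
  {s | (∀ u ∈ s, Irreducible u) ∧ Multiset.card s = l ∧ s.prod = a}

theorem not_isUnit_of_mem_setOfLengths {M : Type*} [CommMonoid M] {a : M} {l : ℕ}
    (hl : l ∈ setOfLengths a) (hl0 : l ≠ 0) : ¬ IsUnit a := by
  obtain ⟨s, hs, rfl, rfl⟩ := hl
  obtain ⟨u, hu⟩ := Multiset.card_pos_iff_exists_mem.mp (Nat.pos_of_ne_zero hl0)
  exact fun hunit => (hs u hu).not_isUnit (isUnit_of_dvd_unit (Multiset.dvd_prod hu) hunit)

theorem ne_zero_of_mem_setOfLengths {M : Type*} [CommMonoidWithZero M] [NoZeroDivisors M]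
    [Nontrivial M] {a : M} {l : ℕ} (hl : l ∈ setOfLengths a) : a ≠ 0 := by
  obtain ⟨s, hs, -, rfl⟩ := hl
  exact Multiset.prod_ne_zero fun hzero => not_irreducible_zero (hs 0 hzero)

theorem setOfLengths_associatesMk {M : Type*} [CommMonoidWithZero M] {a : M} (ha : ¬ IsUnit a) :
    setOfLengths (Associates.mk a) = setOfLengths a := by
  ext l
  constructor
  · rintro ⟨s, hs, hcard, hprod⟩
    obtain ⟨t, rfl⟩ := Multiset.map_surjective_of_surjective Associates.mk_surjective s
    have ht : ∀ u ∈ t, Irreducible u := fun u hu =>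
      Associates.irreducible_mk.mp (hs _ (Multiset.mem_map_of_mem _ hu))
    rw [Associates.prod_mk, Associates.mk_eq_mk_iff_associated] at hprod
    obtain ⟨c, rfl⟩ := hprod
    rcases t.empty_or_exists_mem with rfl | ⟨u, hu⟩
    · exact absurd (by simp only [Multiset.prod_zero, one_mul, Units.isUnit]) ha
    obtain ⟨t, rfl⟩ := Multiset.exists_cons_of_mem hu
    rw [Multiset.forall_mem_cons] at ht
    refine ⟨(u * c) ::ₘ t, Multiset.forall_mem_cons.mpr ⟨(irreducible_mul_units c).mpr ht.1, ht.2⟩,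
      by simpa only [Multiset.card_map, Multiset.card_cons] using hcard, ?_⟩
    rw [Multiset.prod_cons, Multiset.prod_cons, mul_right_comm]
  · rintro ⟨s, hs, rfl, rfl⟩
    refine ⟨s.map Associates.mk, ?_, Multiset.card_map _ _, Associates.prod_mk⟩
    simpa only [Multiset.forall_mem_map_iff, Associates.irreducible_mk] using hs

/-- The values of `m` are the lengths of `a`, and the family of these values can be lifted to a
family of distinct factorizations of `a`. In particular `a` has at least as many factorizations of
length `l` as there are indices `d` with `m d = l`. -/
structure HasFactorizationLengths {M D : Type*} [CommMonoid M] (a : M) (m : D → ℕ) : Prop where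
  setOfLengths_eq : setOfLengths a = Set.range m
  exists_injective : ∃ F : D → Multiset M, Injective F ∧ ∀ d, F d ∈ factorizations a (m d)

theorem natCast_le_mk_of_injective {β : Type*} {n : ℕ} {f : Fin n → β} (hf : Injective f) :
    (n : Cardinal) ≤ Cardinal.mk β := by
  simpa using Cardinal.lift_mk_le_lift_mk_of_injective hf

theorem HasFactorizationLengths.natCast_le_mk {M ι : Type*} [CommMonoid M] {a : M} {m n : ι → ℕ}
    (h : HasFactorizationLengths a fun d : Σ i, Fin (n i) => m d.1) (i : ι) :
    (n i : Cardinal) ≤ Cardinal.mk (factorizations a (m i)) := by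
  obtain ⟨F, hF, hmem⟩ := h.exists_injective
  exact natCast_le_mk_of_injective (f := fun j => ⟨F ⟨i, j⟩, hmem ⟨i, j⟩⟩) fun _ _ hj =>
    sigma_mk_injective (β := fun i => Fin (n i)) (hF (congrArg Subtype.val hj))

section PrimePower

variable {M : Type*} [CommMonoidWithZero M] {q a : M} {l : ℕ} {s : Multiset M}

theorem cons_mem_factorizations (hq : Irreducible q) (hs : s ∈ factorizations a l) :
    q ::ₘ s ∈ factorizations (q * a) (l + 1) :=
  ⟨Multiset.forall_mem_cons.mpr ⟨hq, hs.1⟩, by rw [Multiset.card_cons, hs.2.1],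
    by rw [Multiset.prod_cons, hs.2.2]⟩

theorem replicate_add_mem_factorizations (hq : Irreducible q) (t : ℕ)
    (hs : s ∈ factorizations a l) :
    Multiset.replicate t q + s ∈ factorizations (q ^ t * a) (l + t) := by
  induction t with
  | zero => simpa only [Multiset.replicate_zero, zero_add, pow_zero, one_mul, add_zero] using hs
  | succ t ih =>
    simpa only [Multiset.replicate_succ, Multiset.cons_add, pow_succ', mul_assoc, add_assoc]
      using cons_mem_factorizations hq ih

variable [IsCancelMulZero M] [Subsingleton Mˣ]

theorem setOfLengths_prime_mul (hq : Prime q) (a : M) :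
    setOfLengths (q * a) = (· + 1) '' setOfLengths a := by
  ext l
  constructor
  · rintro ⟨s, hs, rfl, hprod⟩
    obtain ⟨u, hu, hqu⟩ := hq.exists_mem_multiset_dvd (hprod ▸ dvd_mul_right q a)
    obtain rfl : q = u := associated_iff_eq.mp (hq.irreducible.associated_of_dvd (hs u hu) hqu)
    obtain ⟨s, rfl⟩ := Multiset.exists_cons_of_mem hu
    rw [Multiset.prod_cons] at hprod
    exact ⟨Multiset.card s, ⟨s, (Multiset.forall_mem_cons.mp hs).2, rfl,
      mul_left_cancel₀ hq.ne_zero hprod⟩, (Multiset.card_cons q s).symm⟩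
  · rintro ⟨l, ⟨s, hs⟩, rfl⟩
    exact ⟨q ::ₘ s, cons_mem_factorizations hq.irreducible hs⟩

theorem setOfLengths_prime_pow_mul (hq : Prime q) (t : ℕ) (a : M) :
    setOfLengths (q ^ t * a) = (· + t) '' setOfLengths a := by
  induction t with
  | zero => simp only [pow_zero, one_mul, add_zero, Set.image_id']
  | succ t ih =>
    simp only [pow_succ', mul_assoc, setOfLengths_prime_mul hq, ih, Set.image_image, add_assoc]

theorem HasFactorizationLengths.prime_pow_mul (hq : Prime q) (t : ℕ) {D : Type*} {m : D → ℕ}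
    (h : HasFactorizationLengths a m) :
    HasFactorizationLengths (q ^ t * a) fun d => m d + t := by
  obtain ⟨hlengths, F, hF, hmem⟩ := h
  refine ⟨?_, fun d => Multiset.replicate t q + F d, (add_right_injective _).comp hF,
    fun d => replicate_add_mem_factorizations hq.irreducible t (hmem d)⟩
  rw [setOfLengths_prime_pow_mul hq, hlengths, ← Set.range_comp']

end PrimePower

end Factorizations

/-- The map `r` *realizes* the product-one sets of `g` as divisors in the monoid `M`: it is
injective on them, takes disjoint unions to products, and every factorization of the image of a
product-one set comes from splitting that set into two product-one sets. The values of `r` on other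
sets are irrelevant. -/
structure RealizesProductOneSets {X G M : Type*} [CommMonoid G] [CommMonoid M] [DecidableEq X]
    (g : X → G) (r : Finset X → M) : Prop where
  injOn : Set.InjOn r {A | IsProductOne g A}
  map_empty : r ∅ = 1
  map_union {A B : Finset X} (hA : IsProductOne g A) (hB : IsProductOne g B)
    (hAB : Disjoint A B) : r (A ∪ B) = r A * r B
  exists_of_mul_eq {A : Finset X} {u v : M} (hA : IsProductOne g A) (huv : u * v = r A) :
    ∃ B C, IsProductOne g B ∧ IsProductOne g C ∧ Disjoint B C ∧ B ∪ C = A ∧ u = r B ∧ v = r C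

namespace RealizesProductOneSets

variable {X G M : Type*} [CommMonoid G] [CommMonoid M] [DecidableEq X] {g : X → G}
  {r : Finset X → M}

theorem map_biUnion (hr : RealizesProductOneSets g r) {ι : Type*} (S : Finset ι)
    {A : ι → Finset X} (hA : ∀ i, IsProductOne g (A i)) (hdisj : Pairwise (Disjoint on A)) :
    r (S.biUnion A) = ∏ i ∈ S, r (A i) := by
  classical
  induction S using Finset.induction with
  | empty => exact hr.map_empty
  | insert i S hi ih =>
    have hS : IsProductOne g (S.biUnion A) := .biUnion (fun j _ => hA j) (hdisj.set_pairwise S)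
    have hiS : Disjoint (A i) (S.biUnion A) :=
      (Finset.disjoint_biUnion_right _ _ _).mpr fun j hj =>
        hdisj (ne_of_mem_of_not_mem hj hi).symm
    rw [Finset.biUnion_insert, Finset.prod_insert hi, hr.map_union (hA i) hS hiS, ih]

variable {A : Finset X}

theorem eq_one_iff (hr : RealizesProductOneSets g r) (hA : IsProductOne g A) :
    r A = 1 ↔ A = ∅ := by
  rw [← hr.map_empty]
  exact hr.injOn.eq_iff hA (isProductOne_empty g)

variable [Subsingleton Mˣ]

theorem isUnit_iff (hr : RealizesProductOneSets g r) (hA : IsProductOne g A) :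
    IsUnit (r A) ↔ A = ∅ :=
  isUnit_iff_eq_one.trans (hr.eq_one_iff hA)

theorem irreducible_iff (hr : RealizesProductOneSets g r) (hA : IsProductOne g A) :
    Irreducible (r A) ↔ Minimal (fun B => B.Nonempty ∧ IsProductOne g B) A := by
  constructor
  · intro hirr
    have hne : A.Nonempty := Finset.nonempty_iff_ne_empty.mpr fun h =>
      hirr.not_isUnit ((hr.isUnit_iff hA).mpr h)
    refine ⟨⟨hne, hA⟩, fun B ⟨hBne, hB⟩ hBA => ?_⟩
    have hC := hA.sdiff hB hBA
    have hsplit : r A = r B * r (A \ B) := by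
      rw [← hr.map_union hB hC Finset.disjoint_sdiff, Finset.union_sdiff_of_subset hBA]
    rcases hirr.isUnit_or_isUnit hsplit with hunit | hunit
    · exact absurd ((hr.isUnit_iff hB).mp hunit) hBne.ne_empty
    · exact Finset.sdiff_eq_empty_iff_subset.mp ((hr.isUnit_iff hC).mp hunit)
  · intro hmin
    refine ⟨fun hunit => hmin.prop.1.ne_empty ((hr.isUnit_iff hA).mp hunit), fun u v huv => ?_⟩
    obtain ⟨B, C, hB, hC, hBC, rfl, rfl, rfl⟩ := hr.exists_of_mul_eq hA huv.symm
    rw [hr.isUnit_iff hB, hr.isUnit_iff hC, or_iff_not_imp_left, ← ne_eq,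
      ← Finset.nonempty_iff_ne_empty]
    intro hBne
    have hCB : C ⊆ B := Finset.subset_union_right.trans
      (hmin.le_of_le ⟨hBne, hB⟩ Finset.subset_union_left)
    exact (hBC.symm.mono_right hCB).eq_bot_of_self

theorem exists_finpartition (hr : RealizesProductOneSets g r) {s : Multiset M}
    (hs : ∀ u ∈ s, Irreducible u) (hA : IsProductOne g A) (hprod : s.prod = r A) :
    ∃ P : Finpartition A, s = P.parts.val.map r ∧ ∀ B ∈ P.parts, IsProductOne g B := by
  induction s using Multiset.induction generalizing A with
  | empty =>
    obtain rfl : A = ∅ := (hr.eq_one_iff hA).mp hprod.symm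
    exact ⟨Finpartition.empty _, rfl, fun B hB => absurd hB (Finset.notMem_empty B)⟩
  | cons u s ih =>
    rw [Multiset.forall_mem_cons] at hs
    rw [Multiset.prod_cons] at hprod
    obtain ⟨B, C, hB, hC, hBC, hunion, rfl, hsC⟩ := hr.exists_of_mul_eq hA hprod
    obtain ⟨P, rfl, hP⟩ := ih hs.2 hC hsC
    have hBne : B ≠ ⊥ := ((hr.irreducible_iff hB).mp hs.1).prop.1.ne_empty
    have hBP : B ∉ P.parts := fun hmem => hBne (hBC.eq_bot_of_le (P.le hmem))
    refine ⟨P.extend hBne hBC.symm ((Finset.union_comm C B).trans hunion), ?_, ?_⟩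
    · rw [Finpartition.extend_parts, Finset.insert_val_of_notMem hBP, Multiset.map_cons]
    · rw [Finpartition.extend_parts, Finset.forall_mem_insert]
      exact ⟨hB, hP⟩

end RealizesProductOneSets

section DistinctPrimes

variable {X N : Type*} [CommMonoidWithZero N] [IsCancelMulZero N] [Subsingleton Nˣ] {p : X → N}

theorem injective_prod_of_prime (hp : ∀ x, Prime (p x)) (hinj : Injective p) :
    Injective fun A : Finset X => ∏ x ∈ A, p x := by
  have hmem : ∀ {A : Finset X} {x}, x ∈ A ↔ p x ∣ ∏ y ∈ A, p y := by
    intro A x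
    refine ⟨Finset.dvd_prod_of_mem p, fun hdvd => ?_⟩
    obtain ⟨y, hy, hxy⟩ := (hp x).exists_mem_finset_dvd hdvd
    rwa [hinj (associated_iff_eq.mp ((hp x).associated_of_dvd (hp y) hxy))]
  intro A B hAB
  ext x
  rw [hmem, hmem, show ∏ y ∈ A, p y = ∏ y ∈ B, p y from hAB]

theorem exists_realizesProductOneSets {G M : Type*} [CommMonoid G] [CommMonoid M] [DecidableEq X]
    {g : X → G} {ψ : M →* N} (hψ : Injective ψ) (hp : ∀ x, Prime (p x))
    (hinj : Injective p) (hg : ∀ A, IsProductOne g A ↔ ∏ x ∈ A, p x ∈ Set.range ψ) :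
    ∃ r : Finset X → M, RealizesProductOneSets g r := by
  let r (A : Finset X) : M := invFun ψ (∏ x ∈ A, p x)
  have hr : ∀ {A}, IsProductOne g A → ψ (r A) = ∏ x ∈ A, p x := fun hA =>
    invFun_eq ((hg _).mp hA)
  have hr' : ∀ {A u}, ψ u = ∏ x ∈ A, p x → IsProductOne g A ∧ u = r A := fun {A u} hu =>
    have hA : IsProductOne g A := (hg A).mpr ⟨u, hu⟩
    ⟨hA, hψ (hu.trans (hr hA).symm)⟩
  refine ⟨r, ?_, ?_, fun {A B} hA hB hAB => ?_, fun {A u v} hA huv => ?_⟩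
  · intro A hA B hB hAB
    exact injective_prod_of_prime hp hinj ((hr hA).symm.trans ((congrArg ψ hAB).trans (hr hB)))
  · exact ((hr' ((map_one ψ).trans Finset.prod_empty.symm)).2).symm
  · refine ((hr' ?_).2).symm
    rw [map_mul, hr hA, hr hB, Finset.prod_union hAB]
  · have hprod : ψ u * ψ v = 1 * ∏ x ∈ A, p x := by rw [← map_mul, huv, hr hA, one_mul]
    obtain ⟨B, C, b, c, hunion, hdisj, hbc, hB, hC⟩ :=
      mul_eq_mul_prime_prod (fun x _ => hp x) hprod
    obtain ⟨rfl, rfl⟩ : b = 1 ∧ c = 1 := mul_eq_one.mp hbc.symm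
    rw [one_mul] at hB hC
    exact ⟨B, C, (hr' hB).1, (hr' hC).1, hdisj, hunion, (hr' hB).2, (hr' hC).2⟩

end DistinctPrimes

section ClassGroup

variable {R : Type*} [CommRing R]

/-- The embedding of the monoid of associate classes into the monoid of ideals, sending the class
of `x` to the ideal generated by `x`. -/
noncomputable def associatesToIdeal (R : Type*) [CommRing R] [IsDomain R] :
    Associates R →* Ideal R :=
  (Ideal.isPrincipalSubmonoid R).subtype.comp (Ideal.associatesMulEquivIsPrincipal R).toMonoidHom

theorem associatesToIdeal_injective [IsDomain R] : Injective (associatesToIdeal R) :=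
  Subtype.val_injective.comp (Ideal.associatesMulEquivIsPrincipal R).injective

theorem mem_range_associatesToIdeal [IsDomain R] {I : Ideal R} :
    I ∈ Set.range (associatesToIdeal R) ↔ I.IsPrincipal := by
  constructor
  · rintro ⟨a, rfl⟩
    exact (Ideal.associatesMulEquivIsPrincipal R a).2
  · intro hI
    exact ⟨(Ideal.associatesMulEquivIsPrincipal R).symm ⟨I, hI⟩,
      congrArg Subtype.val ((Ideal.associatesMulEquivIsPrincipal R).apply_symm_apply ⟨I, hI⟩)⟩

variable [IsDedekindDomain R]

theorem exists_realizesProductOneSets_associates {X : Type*} [DecidableEq X]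
    (hprimes : ∀ c : ClassGroup R, ∃ P : (Ideal R)⁰, (P : Ideal R).IsPrime ∧ ClassGroup.mk0 P = c)
    {g : X → ClassGroup R} (hg : Injective g) :
    ∃ r : Finset X → Associates R, RealizesProductOneSets g r := by
  choose P hP hPclass using hprimes
  have hmk0 : LeftInverse ClassGroup.mk0 P := hPclass
  refine exists_realizesProductOneSets associatesToIdeal_injective
    (p := fun x => (P (g x) : Ideal R))
    (fun x => Ideal.prime_of_isPrime (nonZeroDivisors.coe_ne_zero _) (hP (g x)))
    (Subtype.val_injective.comp (hmk0.injective.comp hg)) fun A => ?_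
  have hprod : ClassGroup.mk0 (∏ x ∈ A, P (g x)) = ∏ x ∈ A, g x := by
    rw [map_prod]
    exact Finset.prod_congr rfl fun x _ => hPclass (g x)
  rw [mem_range_associatesToIdeal, ← Submonoid.coe_finsetProd, IsProductOne, ← hprod]
  exact ClassGroup.mk0_eq_one_iff _

theorem exists_prime_associates
    (h : ∃ P : (Ideal R)⁰, (P : Ideal R).IsPrime ∧ ClassGroup.mk0 P = 1) :
    ∃ q : Associates R, Prime q := by
  obtain ⟨P, hP, hclass⟩ := h
  obtain ⟨q, hq : (P : Ideal R) = Ideal.span {q}⟩ := (ClassGroup.mk0_eq_one_iff P.2).mp hclass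
  have hprime : Prime (Ideal.span {q}) :=
    hq ▸ Ideal.prime_of_isPrime (nonZeroDivisors.coe_ne_zero P) hP
  exact ⟨Associates.mk q, Associates.prime_mk.mpr (Ideal.prime_span_singleton_iff.mp hprime)⟩

end ClassGroup

section GridFactorizations

variable {D G M : Type*} [Fintype D] [DecidableEq D] {α : D → Type*} [∀ d, Fintype (α d)]
  [∀ d, DecidableEq (α d)] [∀ d, Nontrivial (α d)] [CommGroup G] [CommMonoid M]
  {g : (∀ d, α d) → G} {r : Finset (∀ d, α d) → M}

theorem IsGridGeneric.injective_map_slice (hg : IsGridGeneric g)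
    (hr : RealizesProductOneSets g r) :
    Injective fun d => Finset.univ.val.map fun a : α d => r (slice d a) := by
  intro p q hpq
  by_contra hne
  beta_reduce at hpq
  let a : α p := Classical.arbitrary (α p)
  have hmem : r (slice p a) ∈ Finset.univ.val.map fun b : α q => r (slice q b) :=
    hpq ▸ Multiset.mem_map_of_mem _ (Finset.mem_univ a)
  obtain ⟨b, -, hb⟩ := Multiset.mem_map.mp hmem
  exact slice_ne_slice hne a b
    (hr.injOn (hg.isProductOne_slice p a) (hg.isProductOne_slice q b) hb.symm)

variable [Subsingleton Mˣ]

theorem IsGridGeneric.map_slice_mem_factorizations (hg : IsGridGeneric g)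
    (hr : RealizesProductOneSets g r) (d : D) :
    Finset.univ.val.map (fun a => r (slice d a)) ∈
      factorizations (r Finset.univ) (Fintype.card (α d)) := by
  have hslices := hg.isProductOne_slice d
  refine ⟨?_, by rw [Multiset.card_map, Finset.card_val, Finset.card_univ], ?_⟩
  · rw [Multiset.forall_mem_map_iff]
    exact fun a _ => (hr.irreducible_iff (hslices a)).mpr (hg.minimal_slice d a)
  · rw [← biUnion_slice d, hr.map_biUnion _ hslices (pairwise_disjoint_slice d)]
    rfl

variable [Nonempty D]

theorem IsGridGeneric.eq_two_or_eq_card_of_mem_setOfLengths (hg : IsGridGeneric g)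
    (hr : RealizesProductOneSets g r) {l : ℕ} (hl : l ∈ setOfLengths (r Finset.univ)) :
    l = 2 ∨ ∃ d, l = Fintype.card (α d) := by
  obtain ⟨s, hs, rfl, hprod⟩ := hl
  obtain ⟨P, rfl, hP⟩ := hr.exists_finpartition hs hg.isProductOne_univ hprod
  rw [Multiset.card_map, Finset.card_val]
  exact hg.card_parts_eq P fun A hA =>
    (hr.irreducible_iff (hP A hA)).mp (hs _ (Multiset.mem_map_of_mem r hA))

theorem IsGridGeneric.hasFactorizationLengths (hg : IsGridGeneric g)
    (hr : RealizesProductOneSets g r) (htwo : ∃ d, Fintype.card (α d) = 2) :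
    HasFactorizationLengths (r Finset.univ) fun d => Fintype.card (α d) := by
  refine ⟨Set.Subset.antisymm (fun l hl => ?_) ?_, _, hg.injective_map_slice hr,
    hg.map_slice_mem_factorizations hr⟩
  · rcases hg.eq_two_or_eq_card_of_mem_setOfLengths hr hl with rfl | ⟨d, rfl⟩
    · exact htwo
    · exact Set.mem_range_self d
  · rintro _ ⟨d, rfl⟩
    exact ⟨_, hg.map_slice_mem_factorizations hr d⟩

end GridFactorizations

section Dedekind

variable {R : Type*} [CommRing R] [IsDedekindDomain R] [Infinite (ClassGroup R)]

theorem exists_hasFactorizationLengths_of_exists_eq_two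
    (hprimes : ∀ c : ClassGroup R, ∃ P : (Ideal R)⁰, (P : Ideal R).IsPrime ∧ ClassGroup.mk0 P = c)
    {D : Type*} [Finite D] (hD : 2 < Nat.card D) {m : D → ℕ} (hm : ∀ d, 2 ≤ m d)
    (htwo : ∃ d, m d = 2) : ∃ a : Associates R, HasFactorizationLengths a m := by
  classical
  cases nonempty_fintype D
  have : Nonempty D := htwo.nonempty
  have : ∀ d, Nontrivial (Fin (m d)) := fun d => Fin.nontrivial_iff_two_le.mpr (hm d)
  obtain ⟨g, hg⟩ := exists_isGridGeneric (fun d => Fin (m d)) (ClassGroup R)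
    (Nat.card_eq_fintype_card (α := D) ▸ hD)
  obtain ⟨r, hr⟩ := exists_realizesProductOneSets_associates hprimes hg.injective
  have hlengths := hg.hasFactorizationLengths hr (by simpa only [Fintype.card_fin] using htwo)
  exact ⟨_, by simpa only [Fintype.card_fin] using hlengths⟩

theorem exists_hasFactorizationLengths
    (hprimes : ∀ c : ClassGroup R, ∃ P : (Ideal R)⁰, (P : Ideal R).IsPrime ∧ ClassGroup.mk0 P = c)
    {D : Type*} [Finite D] (hD : 2 < Nat.card D) {m : D → ℕ} (hm : ∀ d, 2 ≤ m d) :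
    ∃ a : Associates R, HasFactorizationLengths a m := by
  have : Nonempty D := (Nat.card_pos_iff.mp (two_pos.trans hD)).1
  obtain ⟨d₀, hd₀⟩ := Finite.exists_min m
  obtain ⟨t, ht⟩ := Nat.exists_eq_add_of_le' (hm d₀)
  obtain ⟨a, ha⟩ := exists_hasFactorizationLengths_of_exists_eq_two hprimes hD
    (m := fun d => m d - t) (fun d => by have := hd₀ d; omega) ⟨d₀, by omega⟩
  obtain ⟨q, hq⟩ := exists_prime_associates (hprimes 1)
  have hshift := ha.prime_pow_mul hq t
  have hsub : ∀ d, m d - t + t = m d := fun d => by have := hd₀ d; omega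
  simp only [hsub] at hshift
  exact ⟨_, hshift⟩

end Dedekind

theorem exists_element_with_prescribed_factorizations_general {R : Type*} [CommRing R]
    [IsDedekindDomain R] [Infinite (ClassGroup R)]
    (hprimes : ∀ c : ClassGroup R, ∃ P : (Ideal R)⁰, (P : Ideal R).IsPrime ∧ ClassGroup.mk0 P = c)
    {ι : Type*} [Finite ι] [Nonempty ι] (m : ι → ℕ) (hm : ∀ i, 2 ≤ m i) (n : ι → ℕ) :
    ∃ a : R, a ≠ 0 ∧ ¬ IsUnit a ∧
      (∀ i, (n i : Cardinal) ≤
        Cardinal.mk {s : Multiset (Associates R) |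
          (∀ u ∈ s, Irreducible u) ∧ Multiset.card s = m i ∧ s.prod = Associates.mk a}) ∧
      setOfLengths a = Set.range m := by
  -- The three extra indices make the dimension of the grid at least three.
  let D := Σ i, Fin (n i + 3)
  let i₀ : ι := Classical.arbitrary ι
  have hD : 2 < Nat.card D := by
    have hle : Nat.card (Fin (n i₀ + 3)) ≤ Nat.card D :=
      Nat.card_le_card_of_injective _ (sigma_mk_injective (β := fun i => Fin (n i + 3)))
    rw [Nat.card_fin] at hle
    omega
  obtain ⟨a, ha⟩ := exists_hasFactorizationLengths hprimes hD (m := fun d => m d.1)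
    fun d => hm d.1
  obtain ⟨a, rfl⟩ := Associates.mk_surjective a
  have hlengths : setOfLengths (Associates.mk a) = Set.range m :=
    ha.setOfLengths_eq.trans (Sigma.fst_surjective.range_comp m)
  have hmem : m i₀ ∈ setOfLengths (Associates.mk a) := hlengths ▸ Set.mem_range_self i₀
  have hunit : ¬ IsUnit a := fun h => not_isUnit_of_mem_setOfLengths hmem (by have := hm i₀; omega)
    (Associates.isUnit_mk.mpr h)
  refine ⟨a, Associates.mk_ne_zero.mp (ne_zero_of_mem_setOfLengths hmem), hunit, fun i => ?_,
    (setOfLengths_associatesMk hunit).symm.trans hlengths⟩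
  exact (Nat.cast_le.mpr (Nat.le_add_right _ _)).trans (ha.natCast_le_mk (n := (n · + 3)) i)

/-- **Corollary 4.4(2), quantitative form.** Let `R` be a Dedekind domain, not a field, with
infinite class group such that every class contains infinitely many nonzero prime ideals.
Given lengths `2 ≤ m 0 < m 1 < … < m (k-1)` and multiplicities `n i`, there is a nonzero
nonunit `a ∈ R` having at least `n i` essentially distinct factorizations of length `m i`
(distinct multisets of associate classes of irreducibles with product `a`), and whose set of
lengths is exactly `{m 0, …, m (k-1)}`. -/
theorem exists_element_with_prescribed_factorizations {R : Type*} [CommRing R]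
    [IsDedekindDomain R] (hR : ¬ IsField R) (hinf : Infinite (ClassGroup R))
    (hprimes : ∀ g : ClassGroup R,
      {P : (Ideal R)⁰ | (P : Ideal R).IsPrime ∧ ClassGroup.mk0 P = g}.Infinite)
    (k : ℕ) (hk : 0 < k) (m : Fin k → ℕ) (hm2 : ∀ i, 2 ≤ m i) (hmono : StrictMono m)
    (n : Fin k → ℕ) :
    ∃ a : R, a ≠ 0 ∧ ¬ IsUnit a ∧
      (∀ i : Fin k, (n i : Cardinal) ≤
        Cardinal.mk {s : Multiset (Associates R) |
          (∀ u ∈ s, Irreducible u) ∧ Multiset.card s = m i ∧ s.prod = Associates.mk a}) ∧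
      setOfLengths a = Set.range m := by
  have : Nonempty (Fin k) := ⟨⟨0, hk⟩⟩
  exact exists_element_with_prescribed_factorizations_general
    (fun c => (hprimes c).nonempty) m hm2 n
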